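/- arXiv:2202.12942 — 8 statements merged into one kernel-verified Lean document; each statement's English description precedes it below -/
import Mathlib

section
/- Parseval's relation for the QPFT: for all f, g ∈ L¹(ℝ) ∩ L²(ℝ), ∫_ℝ Q_μ[f](ξ) · conj(Q_μ[g](ξ)) dξ = ∫_ℝ f(t) · conj(g(t)) dt. -/
open MeasureTheory Complex

/-- The constant √(b/(2πi)) = √(b/(2π))·e^{−iπ/4}. -/
noncomputable def qpConst (b : ℝ) : ℂ :=
  (Real.sqrt (b / (2 * Real.pi)) : ℂ) * Complex.exp (-((Real.pi / 4 : ℝ) : ℂ) * Complex.I)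

/-- The dilation ψ_α(t) = α^{−1/2} ψ(t/α). -/
noncomputable def dil (ψ : ℝ → ℂ) (α : ℝ) (t : ℝ) : ℂ :=
  ((α ^ (-(1 / 2 : ℝ)) : ℝ) : ℂ) * ψ (t / α)

/-- The quadratic-phase Fourier transform. -/
noncomputable def QPFT (a b c d e : ℝ) (f : ℝ → ℂ) (ξ : ℝ) : ℂ :=
  qpConst b * ∫ t : ℝ, f t *
    Complex.exp (Complex.I * ((a * t ^ 2 + b * t * ξ + c * ξ ^ 2 + d * t + e * ξ : ℝ) : ℂ))

/-- The quadratic-phase wave packet transform of `f` with respect to the wavelet `ψ`. -/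
noncomputable def QPWPT (a b c d e : ℝ) (ψ f : ℝ → ℂ) (ξ β α : ℝ) : ℂ :=
  qpConst b * ∫ t : ℝ,
    Complex.exp (Complex.I * ((2 * a * t ^ 2 + b * t * ξ + c * ξ ^ 2 + 2 * d * t + e * ξ
      - a * β ^ 2 - d * β : ℝ) : ℂ)) * f t * (starRingEnd ℂ) (dil ψ α (t - β))

/-- The analyzing packet ψ^μ_{ξ,β,α}. -/
noncomputable def qpwPacket (a b c d e : ℝ) (ψ : ℝ → ℂ) (ξ β α : ℝ) (t : ℝ) : ℂ :=
  (starRingEnd ℂ) (qpConst b) *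
    Complex.exp (-Complex.I * ((2 * a * t ^ 2 + b * t * ξ + c * ξ ^ 2 + 2 * d * t + e * ξ
      - a * β ^ 2 - d * β : ℝ) : ℂ)) * dil ψ α (t - β)

open scoped FourierTransform SchwartzMap in
lemma aux_fourier_ae (f : ℝ → ℂ) (hf1 : Integrable f volume) (hf2 : MemLp f 2 volume) :
    ((𝓕 (hf2.toLp f) : Lp ℂ 2 (volume : Measure ℝ)) : ℝ → ℂ) =ᵐ[volume] 𝓕 f := by
  have hcont : Continuous (𝓕 f) := by
    exact VectorFourier.fourierIntegral_continuous Real.continuous_fourierChar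
      (by exact continuous_inner) hf1
  apply ae_eq_of_integral_contDiff_smul_eq
  · exact (Lp.memLp _).locallyIntegrable (by norm_num)
  · exact hcont.locallyIntegrable
  intro φ hφ hφc
  have h1 : HasCompactSupport (fun x => (φ x : ℂ)) := hφc.comp_left (g := Complex.ofReal) rfl
  have h2 : ContDiff ℝ (⊤ : ℕ∞) (fun x => (φ x : ℂ)) := Complex.ofRealCLM.contDiff.comp hφ
  let s : 𝓢(ℝ, ℂ) := h1.toSchwartzMap h2
  have hs : ∀ x, s x = (φ x : ℂ) := fun x => rfl
  have key := congrArg (fun T => T s) (Lp.fourier_toTemperedDistribution_eq (hf2.toLp f))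
  simp only [TemperedDistribution.fourier_apply, Lp.toTemperedDistribution_apply] at key
  have hL : ∫ x, (𝓕 s) x • (hf2.toLp f) x = ∫ x, (𝓕 s) x • f x := by
    apply integral_congr_ae
    filter_upwards [hf2.coeFn_toLp] with x hx
    rw [hx]
  have hM := VectorFourier.integral_fourierIntegral_smul_eq_flip (L := innerₗ ℝ)
    (f := (s : ℝ → ℂ)) (g := f) (μ := volume) (ν := volume)
    Real.continuous_fourierChar (by exact continuous_inner) s.integrable hf1
  rw [flip_innerₗ] at hM
  calc ∫ x, φ x • ((𝓕 (hf2.toLp f) : Lp ℂ 2 (volume : Measure ℝ)) : ℝ → ℂ) x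
      = ∫ x, s x • ((𝓕 (hf2.toLp f) : Lp ℂ 2 (volume : Measure ℝ)) : ℝ → ℂ) x := by
        simp [hs]
    _ = ∫ x, (𝓕 s) x • f x := by rw [← key, hL]
    _ = ∫ x, s x • (𝓕 f) x := by
        rw [SchwartzMap.fourier_coe]; exact hM
    _ = ∫ x, φ x • (𝓕 f) x := by simp [hs]
  rfl

open scoped FourierTransform in
lemma aux_parseval (f g : ℝ → ℂ)
    (hf1 : Integrable f volume) (hf2 : MemLp f 2 volume)
    (hg1 : Integrable g volume) (hg2 : MemLp g 2 volume) :
    ∫ ξ : ℝ, 𝓕 f ξ * (starRingEnd ℂ) (𝓕 g ξ) = ∫ t : ℝ, f t * (starRingEnd ℂ) (g t) := by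
  have h := Lp.inner_fourier_eq (hg2.toLp g) (hf2.toLp f)
  rw [L2.inner_def, L2.inner_def] at h
  calc _ = _ := integral_congr_ae ?_
    _ = _ := h
    _ = _ := integral_congr_ae ?_
  · filter_upwards [aux_fourier_ae f hf1 hf2, aux_fourier_ae g hg1 hg2] with x h1 h2
    rw [h1, h2]; simp
  · filter_upwards [hf2.coeFn_toLp, hg2.coeFn_toLp] with x h1 h2
    rw [h1, h2]; simp

/-- chirp -/
noncomputable def auxChirp (a d t : ℝ) : ℂ := Complex.exp (((a * t ^ 2 + d * t : ℝ) : ℂ) * Complex.I)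

lemma auxChirp_norm (a d t : ℝ) : ‖auxChirp a d t‖ = 1 := Complex.norm_exp_ofReal_mul_I _

lemma auxChirp_conj (a d t : ℝ) : auxChirp a d t * (starRingEnd ℂ) (auxChirp a d t) = 1 := by
  rw [Complex.mul_conj, Complex.normSq_eq_norm_sq, auxChirp_norm]; simp

lemma auxChirp_cont (a d : ℝ) : Continuous (auxChirp a d) := by
  unfold auxChirp; fun_prop

lemma auxChirp_aesm (a d : ℝ) (f : ℝ → ℂ) (hf : AEStronglyMeasurable f volume) :
    AEStronglyMeasurable (fun t => auxChirp a d t * f t) volume :=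
  (auxChirp_cont a d).aestronglyMeasurable.mul hf

open scoped FourierTransform in
lemma aux_QPFT (a b c d e : ℝ) (f : ℝ → ℂ) (ξ : ℝ) :
    QPFT a b c d e f ξ = qpConst b * auxChirp c e ξ *
      𝓕 (fun t => auxChirp a d t * f t) (-(b / (2 * Real.pi)) * ξ) := by
  rw [Real.fourier_real_eq_integral_exp_smul, QPFT, mul_assoc]
  congr 1
  rw [← integral_const_mul]
  congr 1 with t
  have : I * ((a * t ^ 2 + b * t * ξ + c * ξ ^ 2 + d * t + e * ξ : ℝ) : ℂ)
      = ((c * ξ ^ 2 + e * ξ : ℝ) : ℂ) * I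
        + ((↑(-2 * Real.pi * t * (-(b / (2 * Real.pi)) * ξ)) * I)
        + ((a * t ^ 2 + d * t : ℝ) : ℂ) * I) := by
    have hpi : -2 * Real.pi * t * (-(b / (2 * Real.pi)) * ξ) = b * t * ξ := by
      field_simp
    rw [hpi]; push_cast; ring
  rw [this, Complex.exp_add, Complex.exp_add]
  simp only [auxChirp, smul_eq_mul]
  ring

lemma aux_const (b : ℝ) (hb : 0 < b) :
    qpConst b * (starRingEnd ℂ) (qpConst b) = ((b / (2 * Real.pi) : ℝ) : ℂ) := by
  rw [Complex.mul_conj, Complex.normSq_eq_norm_sq, qpConst, norm_mul, ← Complex.ofReal_neg,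
    Complex.norm_exp_ofReal_mul_I, mul_one, Complex.norm_real, Real.norm_eq_abs, sq_abs,
    Real.sq_sqrt (by positivity)]

open scoped FourierTransform in
theorem qpft_parseval (a b c d e : ℝ) (hb : 0 < b) (f g : ℝ → ℂ)
    (hf1 : Integrable f volume) (hf2 : MemLp f 2 volume)
    (hg1 : Integrable g volume) (hg2 : MemLp g 2 volume) :
    ∫ ξ : ℝ, QPFT a b c d e f ξ * (starRingEnd ℂ) (QPFT a b c d e g ξ)
      = ∫ t : ℝ, f t * (starRingEnd ℂ) (g t) := by
  have hn : ∀ (h : ℝ → ℂ), ∀ t, ‖h t‖ = ‖auxChirp a d t * h t‖ := fun h t => by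
    rw [norm_mul, auxChirp_norm, one_mul]
  have m1 : ∀ h : ℝ → ℂ, Integrable h volume →
      Integrable (fun t => auxChirp a d t * h t) volume := fun h hh =>
    hh.congr' (auxChirp_aesm a d h hh.1) (.of_forall (hn h))
  have m2 : ∀ h : ℝ → ℂ, MemLp h 2 volume →
      MemLp (fun t => auxChirp a d t * h t) 2 volume := fun h hh =>
    hh.congr_norm (auxChirp_aesm a d h hh.1) (.of_forall (hn h))
  have P := aux_parseval _ _ (m1 f hf1) (m2 f hf2) (m1 g hg1) (m2 g hg2)
  set F := 𝓕 (fun t => auxChirp a d t * f t) with hF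
  set G := 𝓕 (fun t => auxChirp a d t * g t) with hG
  set k := b / (2 * Real.pi) with hk
  have hk0 : 0 < k := by positivity
  have e1 : ∀ ξ, QPFT a b c d e f ξ * (starRingEnd ℂ) (QPFT a b c d e g ξ)
      = (k : ℂ) * (F (-k * ξ) * (starRingEnd ℂ) (G (-k * ξ))) := fun ξ => by
    rw [aux_QPFT, aux_QPFT, ← aux_const b hb, ← hF, ← hG, ← hk]
    simp only [map_mul]
    linear_combination (qpConst b * (starRingEnd ℂ) (qpConst b) * F (-k * ξ) *
      (starRingEnd ℂ) (G (-k * ξ))) * auxChirp_conj c e ξ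
  simp_rw [e1]
  rw [integral_const_mul,
    Measure.integral_comp_mul_left (fun x => F x * (starRingEnd ℂ) (G x)) (-k), P]
  have e2 : ∀ t, auxChirp a d t * f t * (starRingEnd ℂ) (auxChirp a d t * g t)
      = f t * (starRingEnd ℂ) (g t) := fun t => by
    rw [map_mul]
    linear_combination (f t * (starRingEnd ℂ) (g t)) * auxChirp_conj a d t
  simp_rw [e2]
  rw [inv_neg, abs_neg, abs_of_pos (inv_pos.mpr hk0), Complex.real_smul, ← mul_assoc,
    ← Complex.ofReal_mul, mul_inv_cancel₀ hk0.ne']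
  simp
end

section
/- Plancherel identity for the QPFT: for every f ∈ L¹(ℝ) ∩ L²(ℝ), ∫_ℝ |Q_μ[f](ξ)|² dξ = ∫_ℝ |f(t)|² dt. -/
open MeasureTheory Complex

open FourierTransform SchwartzMap in
lemma fourier_ae_eq_L2 (g : ℝ → ℂ) (h1 : Integrable g volume) (h2 : MemLp g 2 volume) :
    ∀ᵐ x ∂(volume : Measure ℝ), 𝓕 g x = (𝓕 (h2.toLp g) : Lp ℂ 2 (volume : Measure ℝ)) x := by
  have hcont : Continuous (𝓕 g) :=
    VectorFourier.fourierIntegral_continuous Real.continuous_fourierChar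
      (innerSL ℝ).continuous₂ h1
  apply ae_eq_of_integral_contDiff_smul_eq
  · exact hcont.locallyIntegrable
  · exact (Lp.memLp _).locallyIntegrable (by norm_num)
  intro φ hφ hφc
  have hc : HasCompactSupport (fun x => (φ x : ℂ)) :=
    hφc.comp_left (g := fun x : ℝ => (x : ℂ)) (by simp)
  have hd : ContDiff ℝ (⊤ : ℕ∞) (fun x => (φ x : ℂ)) := Complex.ofRealCLM.contDiff.comp hφ
  set ψ : 𝓢(ℝ, ℂ) := hc.toSchwartzMap hd with hψ
  have hψa : ∀ x, ψ x = (φ x : ℂ) := fun x => rfl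
  have e1 : ∫ ξ, ψ ξ • 𝓕 g ξ = ∫ x, 𝓕 ψ x • g x := by
    have := VectorFourier.integral_bilin_fourierIntegral_eq_flip
      (ContinuousLinearMap.mul ℂ ℂ) (L := innerₗ ℝ)
      Real.continuous_fourierChar continuous_inner (ψ.integrable (μ := volume)) h1
    symm
    simpa using! this
  have e2 := congrArg (fun T => T ψ) (Lp.fourier_toTemperedDistribution_eq (h2.toLp g))
  simp only [TemperedDistribution.fourier_apply, Lp.toTemperedDistribution_apply] at e2
  have e3 : ∫ x, 𝓕 ψ x • (h2.toLp g) x = ∫ x, 𝓕 ψ x • g x := by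
    apply integral_congr_ae
    filter_upwards [h2.coeFn_toLp] with x hx
    rw [hx]
  have e4 := e1.trans (e3.symm.trans e2)
  simpa [hψa] using e4

open FourierTransform in
lemma plancherel_L1_L2 (g : ℝ → ℂ) (h1 : Integrable g volume) (h2 : MemLp g 2 volume) :
    ∫ x, ‖𝓕 g x‖ ^ 2 = ∫ x, ‖g x‖ ^ 2 := by
  have key := Lp.inner_fourier_eq (h2.toLp g) (h2.toLp g)
  rw [L2.inner_def, L2.inner_def] at key
  have a1 : ∫ x, ‖𝓕 g x‖ ^ 2 =
      ∫ x, ‖(𝓕 (h2.toLp g) : Lp ℂ 2 (volume : Measure ℝ)) x‖ ^ 2 := by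
    apply integral_congr_ae
    filter_upwards [fourier_ae_eq_L2 g h1 h2] with x hx
    rw [hx]
  have a2 : ∫ x, ‖g x‖ ^ 2 = ∫ x, ‖(h2.toLp g) x‖ ^ 2 := by
    apply integral_congr_ae
    filter_upwards [h2.coeFn_toLp] with x hx
    rw [hx]
  rw [a1, a2]
  apply Complex.ofRealLI.injective
  simpa [← LinearIsometry.integral_comp_comm, inner_self_eq_norm_sq_to_K] using key

theorem qpft_plancherel (a b c d e : ℝ) (hb : 0 < b) (f : ℝ → ℂ)
    (hf1 : Integrable f volume) (hf2 : MemLp f 2 volume) :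
    ∫ ξ : ℝ, ‖QPFT a b c d e f ξ‖ ^ 2 = ∫ t : ℝ, ‖f t‖ ^ 2 := by
  set p : ℝ → ℂ := fun t => Complex.exp (((a * t ^ 2 + d * t : ℝ) : ℂ) * Complex.I) with hp
  have hpn : ∀ t, ‖p t‖ = 1 := fun t => Complex.norm_exp_ofReal_mul_I _
  have hpc : Continuous p := by fun_prop
  set g : ℝ → ℂ := fun t => f t * p t with hg
  have hgn : ∀ t, ‖g t‖ = ‖f t‖ := fun t => by simp [hg, hpn]
  have hgm : AEStronglyMeasurable g volume := hf1.1.mul hpc.aestronglyMeasurable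
  have hg1 : Integrable g volume :=
    hf1.congr' hgm (Filter.Eventually.of_forall fun t => (hgn t).symm)
  have hg2 : MemLp g 2 volume := hf2.of_le hgm (Filter.Eventually.of_forall fun t => (hgn t).le)
  have hQ : ∀ ξ, ‖QPFT a b c d e f ξ‖ ^ 2 =
      b / (2 * Real.pi) * ‖FourierTransform.fourier g (-(b / (2 * Real.pi)) * ξ)‖ ^ 2 := by
    intro ξ
    have hi : ∫ t : ℝ, f t * Complex.exp (Complex.I *
          ((a * t ^ 2 + b * t * ξ + c * ξ ^ 2 + d * t + e * ξ : ℝ) : ℂ)) =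
        Complex.exp (((c * ξ ^ 2 + e * ξ : ℝ) : ℂ) * Complex.I) *
          FourierTransform.fourier g (-(b / (2 * Real.pi)) * ξ) := by
      rw [Real.fourier_real_eq_integral_exp_smul, ← integral_const_mul]
      congr 1
      ext t
      simp only [hg, hp, smul_eq_mul]
      rw [show ∀ A B C D : ℂ, A * (B * (C * D)) = C * (A * B * D) by intros; ring,
        ← Complex.exp_add, ← Complex.exp_add]
      congr 2
      have : (Real.pi : ℂ) ≠ 0 := by exact_mod_cast Real.pi_ne_zero
      push_cast
      field_simp
      ring
    have hq : ‖qpConst b‖ ^ 2 = b / (2 * Real.pi) := by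
      have h := Complex.norm_exp_ofReal_mul_I (-(Real.pi / 4))
      push_cast at h
      unfold qpConst
      rw [norm_mul]
      push_cast
      rw [h, mul_one, Complex.norm_real, Real.norm_eq_abs, sq_abs, Real.sq_sqrt (by positivity)]
    unfold QPFT
    rw [hi, norm_mul, norm_mul, Complex.norm_exp_ofReal_mul_I, one_mul, mul_pow, hq]
  simp_rw [hQ]
  rw [integral_const_mul, Measure.integral_comp_mul_left
    (fun y => ‖FourierTransform.fourier g y‖ ^ 2), plancherel_L1_L2 g hg1 hg2]
  simp_rw [hgn]
  have hb' : 0 < b / (2 * Real.pi) := by positivity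
  rw [abs_inv, abs_neg, abs_of_pos hb', smul_eq_mul, mul_inv_cancel_left₀ hb'.ne']
end

section
/- Convolution theorem for the QPFT: let f, g ∈ L¹(ℝ) and define the quadratic-phase convolution (f ∗_μ g)(t) = ∫_ℝ f(z) g(t − z) e^{−i(a(t² − z²) + d(t − z))} dz. Then for every ξ ∈ ℝ, Q_μ[f ∗_μ g](ξ) = √(2πi/b) · e^{−i(cξ² + eξ)} · Q_μ[f](ξ) · Q_μ[t ↦ e^{−i(at² + dt)} g(t)](ξ), where √(2πi/b) denotes the reciprocal of √(b/(2πi)). -/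
open MeasureTheory Complex

/-- The quadratic-phase convolution. -/
noncomputable def qpConv (a d : ℝ) (f g : ℝ → ℂ) (t : ℝ) : ℂ :=
  ∫ z : ℝ, f z * g (t - z) *
    Complex.exp (-Complex.I * ((a * (t ^ 2 - z ^ 2) + d * (t - z) : ℝ) : ℂ))

lemma qpConst_ne_zero' {b : ℝ} (hb : 0 < b) : qpConst b ≠ 0 := by
  unfold qpConst
  refine mul_ne_zero ?_ (Complex.exp_ne_zero _)
  have : 0 < Real.sqrt (b / (2 * Real.pi)) := Real.sqrt_pos.mpr (by positivity)
  exact_mod_cast this.ne'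

lemma integrable_phase {f : ℝ → ℂ} (hf : Integrable f volume) (p : ℝ → ℝ) (hp : Continuous p) :
    Integrable (fun t => f t * Complex.exp (Complex.I * (p t : ℂ))) volume := by
  refine hf.mul_bdd (c := 1) ?_ ?_
  · exact Continuous.aestronglyMeasurable (by fun_prop)
  · refine Filter.Eventually.of_forall fun t => ?_
    rw [mul_comm, Complex.norm_exp_ofReal_mul_I]

theorem qpft_convolution (a b c d e : ℝ) (hb : 0 < b) (f g : ℝ → ℂ)
    (hf : Integrable f volume) (hg : Integrable g volume) (ξ : ℝ) :
    QPFT a b c d e (qpConv a d f g) ξ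
      = (qpConst b)⁻¹ * Complex.exp (-Complex.I * ((c * ξ ^ 2 + e * ξ : ℝ) : ℂ)) *
        QPFT a b c d e f ξ *
        QPFT a b c d e
          (fun t => Complex.exp (-Complex.I * ((a * t ^ 2 + d * t : ℝ) : ℂ)) * g t) ξ := by
  have hC := qpConst_ne_zero' hb
  have hF := integrable_phase hf (fun z => a * z ^ 2 + d * z + b * z * ξ) (by fun_prop)
  have hG := integrable_phase hg (fun z => b * z * ξ) (by fun_prop)
  have key := integral_convolution (ContinuousLinearMap.mul ℝ ℂ) hF hG
  simp only [convolution_def, ContinuousLinearMap.mul_apply'] at key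
  set E : ℂ := Complex.exp (Complex.I * ((c * ξ ^ 2 + e * ξ : ℝ) : ℂ)) with hE
  have hE0 : E ≠ 0 := Complex.exp_ne_zero _
  have hEi : Complex.exp (-Complex.I * ((c * ξ ^ 2 + e * ξ : ℝ) : ℂ)) = E⁻¹ := by
    rw [hE, ← Complex.exp_neg, neg_mul]
  have h1 : QPFT a b c d e f ξ = qpConst b * (E * ∫ t : ℝ, f t *
      Complex.exp (Complex.I * ((a * t ^ 2 + d * t + b * t * ξ : ℝ) : ℂ))) := by
    unfold QPFT
    rw [← integral_const_mul E]
    congr 2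
    funext t
    beta_reduce
    rw [hE, mul_left_comm, ← Complex.exp_add]
    congr 2
    push_cast
    ring
  have h2 : QPFT a b c d e
      (fun t => Complex.exp (-Complex.I * ((a * t ^ 2 + d * t : ℝ) : ℂ)) * g t) ξ
      = qpConst b * (E * ∫ t : ℝ, g t *
      Complex.exp (Complex.I * ((b * t * ξ : ℝ) : ℂ))) := by
    unfold QPFT
    rw [← integral_const_mul E]
    congr 2
    funext t
    beta_reduce
    rw [hE, mul_left_comm, ← Complex.exp_add, mul_comm _ (g t), mul_assoc,
      ← Complex.exp_add]
    congr 2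
    push_cast
    ring
  have h3 : QPFT a b c d e (qpConv a d f g) ξ = qpConst b * (E * ∫ x : ℝ, ∫ t : ℝ,
      f t * Complex.exp (Complex.I * ((a * t ^ 2 + d * t + b * t * ξ : ℝ) : ℂ)) *
      (g (x - t) * Complex.exp (Complex.I * ((b * (x - t) * ξ : ℝ) : ℂ)))) := by
    unfold QPFT qpConv
    rw [← integral_const_mul E]
    congr 2
    funext x
    rw [← integral_const_mul E, ← integral_mul_const]
    congr 1
    funext t
    beta_reduce
    rw [hE, mul_assoc, ← Complex.exp_add, mul_mul_mul_comm, ← Complex.exp_add, mul_left_comm,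
      ← Complex.exp_add]
    congr 2
    push_cast
    ring
  rw [h1, h2, h3, hEi, key]
  field_simp
end

section
/- Inversion theorem for the QPFT: let f ∈ L¹(ℝ) be such that Q_μ[f] ∈ L¹(ℝ). Then for almost every t ∈ ℝ, f(t) = ∫_ℝ Q_μ[f](ξ) · conj(K_μ(t, ξ)) dξ, where K_μ(t, ξ) = √(b/(2πi)) e^{i(at² + btξ + cξ² + dt + eξ)}. -/
open MeasureTheory Complex

open scoped FourierTransform ContDiff in
theorem fourier_inversion_ae {h : ℝ → ℂ} (hh : Integrable h volume)
    (hF : Integrable (𝓕 h) volume) : ∀ᵐ t : ℝ ∂volume, h t = 𝓕⁻ (𝓕 h) t := by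
  have hcont : Continuous (𝓕⁻ (𝓕 h)) :=
    VectorFourier.fourierIntegral_continuous (L := -innerₗ ℝ) Real.continuous_fourierChar
      (continuous_inner (𝕜 := ℝ) (E := ℝ)).neg hF
  refine ae_eq_of_integral_contDiff_smul_eq hh.locallyIntegrable hcont.locallyIntegrable ?_
  intro g hg hgs
  let G : ℝ → ℂ := fun x => (g x : ℂ)
  have hGs : HasCompactSupport G := hgs.comp_left (g := fun x : ℝ => (x : ℂ)) (by simp)
  have hGc : ContDiff ℝ ∞ G := Complex.ofRealCLM.contDiff.comp hg
  let φ : SchwartzMap ℝ ℂ := hGs.toSchwartzMap hGc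
  have hφ : ∀ x, φ x = (g x : ℂ) := fun x => rfl
  have hψ : 𝓕 (𝓕⁻ φ) = φ := FourierTransform.fourier_fourierInv_eq φ
  have h1 : ∫ x, (𝓕 (𝓕⁻ φ)) x • h x = ∫ x, (𝓕⁻ φ) x • 𝓕 h x := by
    have := (VectorFourier.integral_fourierIntegral_smul_eq_flip (L := innerₗ ℝ)
      Real.continuous_fourierChar continuous_inner ((𝓕⁻ φ).integrable (μ := volume)) hh)
    rw [flip_innerₗ] at this
    rw [SchwartzMap.fourier_coe]
    exact this
  have h2 : ∫ x, (𝓕⁻ φ) x • 𝓕 h x = ∫ x, φ x • 𝓕⁻ (𝓕 h) x := by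
    have := (VectorFourier.integral_fourierIntegral_smul_eq_flip (L := -innerₗ ℝ)
      Real.continuous_fourierChar
      (continuous_inner (𝕜 := ℝ) (E := ℝ)).neg (φ.integrable (μ := volume)) hF)
    have hfl : (-innerₗ ℝ).flip = -innerₗ ℝ := by
      ext; simp
    rw [hfl] at this
    rw [SchwartzMap.fourierInv_coe]
    exact this
  rw [hψ, h2] at h1
  simpa [hφ] using h1

theorem qpConst_mul_conj {b : ℝ} (hb : 0 < b) :
    qpConst b * (starRingEnd ℂ) (qpConst b) = ((b / (2 * Real.pi) : ℝ) : ℂ) := by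
  rw [Complex.mul_conj, Complex.normSq_eq_norm_sq, qpConst, norm_mul, ← Complex.ofReal_neg,
    Complex.norm_exp_ofReal_mul_I, Complex.norm_real, mul_one, Real.norm_eq_abs, sq_abs,
    Real.sq_sqrt (by positivity)]

open scoped FourierTransform in
theorem qpft_inversion (a b c d e : ℝ) (hb : 0 < b) (f : ℝ → ℂ)
    (hf : Integrable f volume) (hQf : Integrable (QPFT a b c d e f) volume) :
    ∀ᵐ t : ℝ ∂volume, f t = ∫ ξ : ℝ, QPFT a b c d e f ξ *
      (starRingEnd ℂ) (qpConst b *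
        Complex.exp (Complex.I *
          ((a * t ^ 2 + b * t * ξ + c * ξ ^ 2 + d * t + e * ξ : ℝ) : ℂ))) := by
  have hpi := Real.pi_pos
  have hC := qpConst_mul_conj hb
  have hC0 : qpConst b ≠ 0 := by
    intro h0
    rw [h0, zero_mul] at hC
    have : b / (2 * Real.pi) ≠ 0 := by positivity
    exact this (by exact_mod_cast hC.symm)
  have hnorm : ∀ x : ℝ, ‖Complex.exp (Complex.I * (x : ℂ))‖ = 1 := fun x => by
    rw [mul_comm]; exact Complex.norm_exp_ofReal_mul_I x
  have hbdd : ∀ {u : ℝ → ℂ} (p : ℝ → ℝ), Continuous p → Integrable u volume →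
      Integrable (fun t => u t * Complex.exp (Complex.I * (p t : ℂ))) volume := by
    intro u p hp hu
    refine hu.mul_bdd (c := 1) (Continuous.aestronglyMeasurable (by fun_prop)) ?_
    exact Filter.Eventually.of_forall fun x => (hnorm _).le
  set h : ℝ → ℂ := fun t => f t * Complex.exp (Complex.I * ((a * t ^ 2 + d * t : ℝ) : ℂ)) with hh
  have hhi : Integrable h volume := hbdd _ (by fun_prop) hf
  set k : ℝ := -b / (2 * Real.pi) with hk
  have hk0 : k ≠ 0 := by rw [hk]; exact div_ne_zero (by linarith) (by positivity)
  have hQ : ∀ ξ, QPFT a b c d e f ξ = qpConst b *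
      (Complex.exp (Complex.I * ((c * ξ ^ 2 + e * ξ : ℝ) : ℂ)) * 𝓕 h (k * ξ)) := by
    intro ξ
    rw [QPFT, Real.fourier_real_eq_integral_exp_smul]
    congr 1
    rw [← integral_const_mul]
    refine integral_congr_ae (Filter.Eventually.of_forall fun t => ?_)
    beta_reduce
    have : -2 * Real.pi * t * (k * ξ) = b * t * ξ := by rw [hk]; field_simp
    rw [this, hh, smul_eq_mul]
    have : Complex.exp (Complex.I *
        ((a * t ^ 2 + b * t * ξ + c * ξ ^ 2 + d * t + e * ξ : ℝ) : ℂ)) =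
        Complex.exp (Complex.I * ((c * ξ ^ 2 + e * ξ : ℝ) : ℂ)) *
        Complex.exp (((b * t * ξ : ℝ) : ℂ) * Complex.I) *
        Complex.exp (Complex.I * ((a * t ^ 2 + d * t : ℝ) : ℂ)) := by
      rw [← Complex.exp_add, ← Complex.exp_add]
      congr 1
      push_cast
      ring
    rw [this]
    ring
  have hFi : Integrable (𝓕 h) volume := by
    rw [← integrable_comp_mul_left_iff _ hk0]
    have := (hbdd (fun ξ => -(c * ξ ^ 2 + e * ξ)) (by fun_prop) hQf).const_mul (qpConst b)⁻¹
    refine this.congr (Filter.Eventually.of_forall fun ξ => ?_)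
    simp only [hQ]
    rw [Complex.ofReal_neg, mul_neg, Complex.exp_neg]
    field_simp [Complex.exp_ne_zero]
  filter_upwards [fourier_inversion_ae hhi hFi] with t ht
  have hstep : ∀ ξ : ℝ, QPFT a b c d e f ξ *
      (starRingEnd ℂ) (qpConst b *
        Complex.exp (Complex.I *
          ((a * t ^ 2 + b * t * ξ + c * ξ ^ 2 + d * t + e * ξ : ℝ) : ℂ))) =
      (((b / (2 * Real.pi) : ℝ) : ℂ) *
        Complex.exp (-(Complex.I * ((a * t ^ 2 + d * t : ℝ) : ℂ)))) *
      (fun w : ℝ => Complex.exp (((2 * Real.pi * (w * t) : ℝ) : ℂ) * Complex.I) • 𝓕 h w)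
        (k * ξ) := by
    intro ξ
    have hkt : 2 * Real.pi * (k * ξ * t) = -(b * t * ξ) := by rw [hk]; field_simp
    simp only [hkt]
    rw [hQ, ← hC, map_mul, ← Complex.exp_conj, map_mul, Complex.conj_I, Complex.conj_ofReal,
      smul_eq_mul]
    have : Complex.exp (Complex.I * ((c * ξ ^ 2 + e * ξ : ℝ) : ℂ)) * Complex.exp (-Complex.I *
        ((a * t ^ 2 + b * t * ξ + c * ξ ^ 2 + d * t + e * ξ : ℝ) : ℂ)) =
        Complex.exp (-(Complex.I * ((a * t ^ 2 + d * t : ℝ) : ℂ))) *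
        Complex.exp (((-(b * t * ξ) : ℝ) : ℂ) * Complex.I) := by
      rw [← Complex.exp_add, ← Complex.exp_add]
      congr 1
      push_cast
      ring
    linear_combination (qpConst b * (starRingEnd ℂ) (qpConst b) * 𝓕 h (k * ξ)) * this
  rw [integral_congr_ae (Filter.Eventually.of_forall hstep), integral_const_mul,
    Measure.integral_comp_mul_left
      (fun w : ℝ => Complex.exp (((2 * Real.pi * (w * t) : ℝ) : ℂ) * Complex.I) • 𝓕 h w) k]
  have hinv : ∫ w : ℝ, Complex.exp (((2 * Real.pi * (w * t) : ℝ) : ℂ) * Complex.I) • 𝓕 h w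
      = h t := by
    rw [ht, Real.fourierInv_eq']
    congr 1
    ext w
    simp [mul_comm]
  rw [hinv, hh]
  have habs : |k⁻¹| = 2 * Real.pi / b := by
    rw [hk, abs_inv, abs_div, abs_neg, abs_of_pos hb, abs_of_pos (by positivity), inv_div]
  rw [habs, Complex.exp_neg, Complex.real_smul]
  have hb' : (b : ℂ) ≠ 0 := by exact_mod_cast hb.ne'
  have hp' : (Real.pi : ℂ) ≠ 0 := by exact_mod_cast hpi.ne'
  have hE := Complex.exp_ne_zero (Complex.I * ((a * t ^ 2 + d * t : ℝ) : ℂ))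
  beta_reduce
  generalize Complex.exp (Complex.I * ((a * t ^ 2 + d * t : ℝ) : ℂ)) = E at hE ⊢
  push_cast
  field_simp
end

section
/- Let p, q ∈ (1, ∞) with 1/p + 1/q = 1, let ψ ∈ L^p(ℝ) and f ∈ L^q(ℝ). Then for all ξ, β ∈ ℝ and α > 0, |W^μ_f(ξ, β, α)| ≤ α^{1/p − 1/2} · √(b/(2π)) · ‖ψ‖_{L^p(ℝ)} ‖f‖_{L^q(ℝ)}. -/
open MeasureTheory Complex

theorem qpwpt_pointwise_bound (a b c d e : ℝ) (hb : 0 < b) (p q : ℝ)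
    (hp : 1 < p) (hq : 1 < q) (hpq : 1 / p + 1 / q = 1) (ψ f : ℝ → ℂ)
    (hψ : MemLp ψ (ENNReal.ofReal p) volume) (hf : MemLp f (ENNReal.ofReal q) volume)
    (ξ β α : ℝ) (hα : 0 < α) :
    ‖QPWPT a b c d e ψ f ξ β α‖
      ≤ α ^ (1 / p - 1 / 2) * Real.sqrt (b / (2 * Real.pi)) *
        (eLpNorm ψ (ENNReal.ofReal p) volume).toReal *
        (eLpNorm f (ENNReal.ofReal q) volume).toReal := by
  have hp0 : 0 < p := by linarith
  have hq0 : 0 < q := by linarith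
  have hH : p.HolderConjugate q := by
    rw [Real.holderConjugate_iff]
    exact ⟨hp, by simpa using hpq⟩
  have hp1 : ENNReal.ofReal p ≠ 0 := by simpa using hp0
  have hq1 : ENNReal.ofReal q ≠ 0 := by simpa using hq0
  have hqmp : Measure.QuasiMeasurePreserving (fun t : ℝ => (t - β) / α) volume volume := by
    have h1 : Measure.QuasiMeasurePreserving (fun t : ℝ => t * α⁻¹) volume volume := by
      refine ⟨by fun_prop, ?_⟩
      rw [Real.map_volume_mul_right (inv_ne_zero hα.ne')]
      exact Measure.smul_absolutelyContinuous
    have h2 := (measurePreserving_sub_right (volume : Measure ℝ) β).quasiMeasurePreserving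
    exact h1.comp h2
  have hint : ∀ F : ℝ → ℝ, ∫ t, F ((t - β) / α) = α * ∫ t, F t := by
    intro F
    rw [integral_sub_right_eq_self (fun t => F (t / α)) β, Measure.integral_comp_div,
      abs_of_pos hα, smul_eq_mul]
  have hg : MemLp (fun t => ψ ((t - β) / α)) (ENNReal.ofReal p) volume := by
    have hm := hψ.1.comp_quasiMeasurePreserving hqmp
    refine (integrable_norm_rpow_iff hm hp1 ENNReal.ofReal_ne_top).1 ?_
    have := (integrable_norm_rpow_iff hψ.1 hp1 ENNReal.ofReal_ne_top).2 hψ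
    exact (this.comp_div hα.ne').comp_sub_right β
  have hN := integral_mul_norm_le_Lp_mul_Lq hH hg hf
  rw [hint (fun t => ‖ψ t‖ ^ p)] at hN
  have hIψ : 0 ≤ ∫ t, ‖ψ t‖ ^ p := integral_nonneg fun t => by positivity
  have hIf : 0 ≤ ∫ t, ‖f t‖ ^ q := integral_nonneg fun t => by positivity
  rw [hψ.eLpNorm_eq_integral_rpow_norm hp1 ENNReal.ofReal_ne_top,
    hf.eLpNorm_eq_integral_rpow_norm hq1 ENNReal.ofReal_ne_top,
    ENNReal.toReal_ofReal hp0.le, ENNReal.toReal_ofReal hq0.le,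
    ENNReal.toReal_ofReal (by positivity), ENNReal.toReal_ofReal (by positivity)]
  rw [Real.mul_rpow hα.le hIψ] at hN
  have hC : ‖qpConst b‖ = Real.sqrt (b / (2 * Real.pi)) := by
    unfold qpConst
    rw [norm_mul, ← Complex.ofReal_neg, Complex.norm_exp_ofReal_mul_I, mul_one, Complex.norm_real,
      Real.norm_of_nonneg (Real.sqrt_nonneg _)]
  have hI : ‖∫ t : ℝ,
    Complex.exp (Complex.I * ((2 * a * t ^ 2 + b * t * ξ + c * ξ ^ 2 + 2 * d * t + e * ξ
      - a * β ^ 2 - d * β : ℝ) : ℂ)) * f t * (starRingEnd ℂ) (dil ψ α (t - β))‖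
      ≤ α ^ (-(1 / 2 : ℝ)) * ∫ t, ‖ψ ((t - β) / α)‖ * ‖f t‖ := by
    refine (norm_integral_le_integral_norm _).trans_eq ?_
    rw [← integral_const_mul]
    congr 1
    ext t
    rw [norm_mul, norm_mul, RCLike.norm_conj, mul_comm Complex.I, Complex.norm_exp_ofReal_mul_I]
    unfold dil
    rw [norm_mul, Complex.norm_real, Real.norm_of_nonneg (by positivity)]
    ring
  unfold QPWPT
  rw [norm_mul, hC]
  have hα' : α ^ (1 / p - 1 / 2) = α ^ (-(1 / 2 : ℝ)) * α ^ (1 / p) := by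
    rw [← Real.rpow_add hα]; ring_nf
  rw [hα']
  calc _ ≤ Real.sqrt (b / (2 * Real.pi)) * (α ^ (-(1 / 2 : ℝ)) * _) :=
        mul_le_mul_of_nonneg_left
          (hI.trans (mul_le_mul_of_nonneg_left hN (by positivity))) (Real.sqrt_nonneg _)
    _ = _ := by simp only [one_div]; ring
end

section
/- Let 1 ≤ p < ∞, let ψ ∈ L^p(ℝ) and f ∈ L¹(ℝ). Then for every fixed ξ ∈ ℝ and α > 0, the function β ↦ W^μ_f(ξ, β, α) belongs to L^p(ℝ) and (∫_ℝ |W^μ_f(ξ, β, α)|^p dβ)^{1/p} ≤ α^{1/p − 1/2} · √(b/(2π)) · ‖ψ‖_{L^p(ℝ)} ‖f‖_{L¹(ℝ)}. -/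
open MeasureTheory Complex

open scoped ENNReal

theorem young_aux (F G : ℝ → ℝ≥0∞) (hF : AEMeasurable F volume) (hG : AEMeasurable G volume)
    (p : ℝ) (hp : 1 ≤ p) :
    (∫⁻ β : ℝ, (∫⁻ t : ℝ, F t * G (t - β)) ^ p) ^ (1 / p) ≤
      (∫⁻ t, F t) * (∫⁻ t, G t ^ p) ^ (1 / p) := by
  have hp0 : 0 < p := by linarith
  have hip : 1 / p ≤ 1 := by rw [div_le_one hp0]; exact hp
  have hGs : ∀ β : ℝ, AEMeasurable (fun t => G (t - β)) volume := fun β =>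
    hG.comp_quasiMeasurePreserving (measurePreserving_sub_right volume β).quasiMeasurePreserving
  have h1 : ∀ β : ℝ, (∫⁻ t : ℝ, F t * G (t - β)) ^ p ≤
      (∫⁻ t, F t) ^ (p - 1) * ∫⁻ t, F t * G (t - β) ^ p := by
    intro β
    have h := ENNReal.lintegral_mul_norm_pow_le hF (hF.mul ((hGs β).pow_const p))
      (p := 1 - 1 / p) (q := 1 / p) (by linarith) (by positivity) (by ring)
    have e : ∀ t, F t ^ (1 - 1 / p) * ((F * fun t => G (t - β) ^ p) t) ^ (1 / p)
        = F t * G (t - β) := by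
      intro t
      rw [Pi.mul_apply, ENNReal.mul_rpow_of_nonneg _ _ (by positivity), ← mul_assoc,
        ← ENNReal.rpow_add_of_nonneg _ _ (by linarith) (by positivity), ← ENNReal.rpow_mul,
        mul_one_div_cancel hp0.ne']
      simp
    simp_rw [e] at h
    refine (ENNReal.rpow_le_rpow h hp0.le).trans (le_of_eq ?_)
    rw [ENNReal.mul_rpow_of_nonneg _ _ hp0.le, ← ENNReal.rpow_mul, ← ENNReal.rpow_mul,
      one_div_mul_cancel hp0.ne', ENNReal.rpow_one]
    congr 2
    field_simp
  have hjm : AEMeasurable (fun z : ℝ × ℝ => F z.2 * G (z.2 - z.1) ^ p)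
      ((volume : Measure ℝ).prod volume) := by
    refine (hF.comp_quasiMeasurePreserving Measure.quasiMeasurePreserving_snd).mul
      (AEMeasurable.pow_const ?_ p)
    have := (quasiMeasurePreserving_sub (volume : Measure ℝ) (volume : Measure ℝ)).comp
      (Measure.measurePreserving_swap (μ := (volume : Measure ℝ))
        (ν := (volume : Measure ℝ))).quasiMeasurePreserving
    exact hG.comp_quasiMeasurePreserving this
  have h2 : ∫⁻ β : ℝ, (∫⁻ t : ℝ, F t * G (t - β)) ^ p ≤ (∫⁻ t, F t) ^ p * ∫⁻ t, G t ^ p := by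
    calc _ ≤ ∫⁻ β : ℝ, (∫⁻ t, F t) ^ (p - 1) * ∫⁻ t, F t * G (t - β) ^ p := lintegral_mono h1
      _ = (∫⁻ t, F t) ^ (p - 1) * ∫⁻ β : ℝ, ∫⁻ t, F t * G (t - β) ^ p := by
        rw [lintegral_const_mul'' _ hjm.lintegral_prod_right']
      _ = (∫⁻ t, F t) ^ (p - 1) * ∫⁻ t : ℝ, ∫⁻ β, F t * G (t - β) ^ p := by
        rw [lintegral_lintegral_swap hjm]
      _ = (∫⁻ t, F t) ^ (p - 1) * ∫⁻ t : ℝ, F t * ∫⁻ s, G s ^ p := by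
        congr 2; ext t
        rw [lintegral_const_mul'', lintegral_sub_left_eq_self (fun s => G s ^ p) t]
        exact (hG.comp_quasiMeasurePreserving
          (quasiMeasurePreserving_sub_left volume t)).pow_const p
      _ = _ := by
        rw [lintegral_mul_const'' _ hF, ← mul_assoc]
        congr 1
        nth_rewrite 2 [← ENNReal.rpow_one (∫⁻ t, F t)]
        rw [← ENNReal.rpow_add_of_nonneg _ _ (by linarith) (by norm_num)]
        congr 1; ring
  refine (ENNReal.rpow_le_rpow h2 (by positivity)).trans (le_of_eq ?_)
  rw [ENNReal.mul_rpow_of_nonneg _ _ (by positivity), ← ENNReal.rpow_mul,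
    mul_one_div_cancel hp0.ne', ENNReal.rpow_one]

theorem dil_qmp (α : ℝ) (hα : 0 < α) :
    Measure.QuasiMeasurePreserving (fun t : ℝ => t / α) volume volume := by
  refine ⟨by fun_prop, ?_⟩
  have : (fun t : ℝ => t / α) = (α⁻¹ * ·) := by ext t; ring
  rw [this, Real.map_volume_mul_left (inv_ne_zero hα.ne')]
  exact Measure.smul_absolutelyContinuous

theorem dil_eLpNorm (ψ : ℝ → ℂ) (p : ℝ) (hp : 1 ≤ p) (α : ℝ) (hα : 0 < α)
    (hψ : AEStronglyMeasurable ψ volume) :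
    eLpNorm (dil ψ α) (ENNReal.ofReal p) volume =
      ENNReal.ofReal (α ^ (1 / p - 1 / 2)) * eLpNorm ψ (ENNReal.ofReal p) volume := by
  have hp0 : 0 < p := by linarith
  have h1 : dil ψ α = ((α ^ (-(1 / 2 : ℝ)) : ℝ) : ℂ) • (ψ ∘ (α⁻¹ * ·)) := by
    ext t; simp [dil, div_eq_inv_mul]
  have hm := Real.map_volume_mul_left (inv_ne_zero hα.ne')
  rw [h1, eLpNorm_const_smul, ← eLpNorm_map_measure (by
      rw [hm]; exact hψ.mono_ac Measure.smul_absolutelyContinuous) (by fun_prop), hm,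
    eLpNorm_smul_measure_of_ne_top ENNReal.ofReal_ne_top, smul_eq_mul, ← mul_assoc,
    ENNReal.toReal_div, ENNReal.toReal_one, ENNReal.toReal_ofReal hp0.le, inv_inv, abs_of_pos hα, ENNReal.ofReal_rpow_of_pos hα,
    ← ofReal_norm, Complex.norm_real, Real.norm_of_nonneg (by positivity),
    ← ENNReal.ofReal_mul (by positivity), ← Real.rpow_add hα]
  congr 3
  ring

theorem qpConst_enorm (b : ℝ) : ‖qpConst b‖ₑ = ENNReal.ofReal (Real.sqrt (b / (2 * Real.pi))) := by
  rw [← ofReal_norm, qpConst, norm_mul, ← Complex.ofReal_neg, Complex.norm_exp_ofReal_mul_I,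
    Complex.norm_real, Real.norm_of_nonneg (Real.sqrt_nonneg _), mul_one]

theorem qpwpt_lp_bound (a b c d e : ℝ) (hb : 0 < b) (p : ℝ) (hp : 1 ≤ p) (ψ f : ℝ → ℂ)
    (hψ : MemLp ψ (ENNReal.ofReal p) volume) (hf : Integrable f volume)
    (ξ α : ℝ) (hα : 0 < α) :
    MemLp (fun β => QPWPT a b c d e ψ f ξ β α) (ENNReal.ofReal p) volume ∧
    (∫ β : ℝ, ‖QPWPT a b c d e ψ f ξ β α‖ ^ p) ^ (1 / p)
      ≤ α ^ (1 / p - 1 / 2) * Real.sqrt (b / (2 * Real.pi)) *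
        (eLpNorm ψ (ENNReal.ofReal p) volume).toReal * (∫ t : ℝ, ‖f t‖) := by
  have hp0 : 0 < p := by linarith
  have hdm : AEStronglyMeasurable (dil ψ α) volume :=
    (hψ.1.comp_quasiMeasurePreserving (dil_qmp α hα)).const_mul _
  have hmeas : AEStronglyMeasurable (fun β => QPWPT a b c d e ψ f ξ β α) volume := by
    unfold QPWPT
    refine AEStronglyMeasurable.const_mul ?_ _
    refine AEStronglyMeasurable.integral_prod_right' (μ := (volume : Measure ℝ))
      (ν := (volume : Measure ℝ)) (f := fun z : ℝ × ℝ =>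
      Complex.exp (Complex.I * ((2 * a * z.2 ^ 2 + b * z.2 * ξ + c * ξ ^ 2 + 2 * d * z.2 + e * ξ
      - a * z.1 ^ 2 - d * z.1 : ℝ) : ℂ)) * f z.2 * (starRingEnd ℂ) (dil ψ α (z.2 - z.1))) ?_
    refine (AEStronglyMeasurable.mul (Continuous.aestronglyMeasurable (by fun_prop))
      (hf.1.comp_quasiMeasurePreserving Measure.quasiMeasurePreserving_snd)).mul ?_
    have := (quasiMeasurePreserving_sub (volume : Measure ℝ) (volume : Measure ℝ)).comp
      (Measure.measurePreserving_swap (μ := (volume : Measure ℝ))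
        (ν := (volume : Measure ℝ))).quasiMeasurePreserving
    exact Complex.continuous_conj.comp_aestronglyMeasurable (hdm.comp_quasiMeasurePreserving this)
  have hbd : ∀ β, ‖QPWPT a b c d e ψ f ξ β α‖ₑ ≤ ENNReal.ofReal (Real.sqrt (b / (2 * Real.pi))) *
      ∫⁻ t, ‖f t‖ₑ * ‖dil ψ α (t - β)‖ₑ := by
    intro β
    rw [QPWPT, enorm_mul, qpConst_enorm]
    gcongr
    refine (enorm_integral_le_lintegral_enorm _).trans (le_of_eq ?_)
    congr 1; ext t
    rw [enorm_mul, enorm_mul, ← ofReal_norm (Complex.exp _), mul_comm Complex.I,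
      Complex.norm_exp_ofReal_mul_I, RCLike.enorm_conj]
    simp
  have hpn : ENNReal.ofReal p ≠ 0 := by simpa using hp0
  have key : eLpNorm (fun β => QPWPT a b c d e ψ f ξ β α) (ENNReal.ofReal p) volume ≤
      ENNReal.ofReal (Real.sqrt (b / (2 * Real.pi))) * ((∫⁻ t, ‖f t‖ₑ) *
        (ENNReal.ofReal (α ^ (1 / p - 1 / 2)) * eLpNorm ψ (ENNReal.ofReal p) volume)) := by
    rw [← dil_eLpNorm ψ p hp α hα hψ.1,
      eLpNorm_eq_lintegral_rpow_enorm_toReal hpn ENNReal.ofReal_ne_top,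
      eLpNorm_eq_lintegral_rpow_enorm_toReal hpn ENNReal.ofReal_ne_top,
      ENNReal.toReal_ofReal hp0.le]
    refine le_trans ?_ (mul_le_mul_right (young_aux (fun t => ‖f t‖ₑ) (fun t => ‖dil ψ α t‖ₑ)
      hf.1.enorm hdm.enorm p hp) _)
    have : ∫⁻ β, ‖QPWPT a b c d e ψ f ξ β α‖ₑ ^ p ≤
        (ENNReal.ofReal (Real.sqrt (b / (2 * Real.pi)))) ^ p *
          ∫⁻ β, (∫⁻ t, ‖f t‖ₑ * ‖dil ψ α (t - β)‖ₑ) ^ p := by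
      rw [← lintegral_const_mul' _ _ (ENNReal.rpow_ne_top_of_nonneg hp0.le ENNReal.ofReal_ne_top)]
      refine lintegral_mono fun β => ?_
      rw [← ENNReal.mul_rpow_of_nonneg _ _ hp0.le]
      exact ENNReal.rpow_le_rpow (hbd β) hp0.le
    refine (ENNReal.rpow_le_rpow this (by positivity)).trans (le_of_eq ?_)
    rw [ENNReal.mul_rpow_of_nonneg _ _ (by positivity), ← ENNReal.rpow_mul,
      mul_one_div_cancel hp0.ne', ENNReal.rpow_one]
  have hfin : ENNReal.ofReal (Real.sqrt (b / (2 * Real.pi))) * ((∫⁻ t, ‖f t‖ₑ) *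
        (ENNReal.ofReal (α ^ (1 / p - 1 / 2)) * eLpNorm ψ (ENNReal.ofReal p) volume)) ≠ ⊤ :=
    ENNReal.mul_ne_top ENNReal.ofReal_ne_top (ENNReal.mul_ne_top hf.2.ne
      (ENNReal.mul_ne_top ENNReal.ofReal_ne_top hψ.2.ne))
  have hmem : MemLp (fun β => QPWPT a b c d e ψ f ξ β α) (ENNReal.ofReal p) volume :=
    ⟨hmeas, key.trans_lt hfin.lt_top⟩
  refine ⟨hmem, ?_⟩
  have h3 := ENNReal.toReal_mono hfin key
  rw [hmem.eLpNorm_eq_integral_rpow_norm hpn ENNReal.ofReal_ne_top, ENNReal.toReal_ofReal hp0.le,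
    ENNReal.toReal_ofReal (by positivity), ENNReal.toReal_mul, ENNReal.toReal_mul,
    ENNReal.toReal_mul, ENNReal.toReal_ofReal (Real.sqrt_nonneg _),
    ENNReal.toReal_ofReal (by positivity), ← integral_norm_eq_lintegral_enorm hf.1] at h3
  rw [one_div p] at *
  refine h3.trans (le_of_eq ?_)
  ring
end

section
/- Moyal's formula for the QP-WPT: let f, g ∈ L¹(ℝ) ∩ L²(ℝ), let ψ, φ ∈ L¹(ℝ) ∩ L²(ℝ), and fix α > 0. Denote by W^{μ,ψ}_f the QP-WPT of f with respect to the wavelet ψ and by W^{μ,φ}_g the QP-WPT of g with respect to the wavelet φ. Then ∫_ℝ ∫_ℝ W^{μ,ψ}_f(ξ, β, α) · conj(W^{μ,φ}_g(ξ, β, α)) dξ dβ = conj(⟨ψ, φ⟩_{L²(ℝ)}) · ⟨f, g⟩_{L²(ℝ)}, where ⟨u, v⟩_{L²(ℝ)} = ∫_ℝ u(t) conj(v(t)) dt. -/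
open MeasureTheory Complex

open scoped FourierTransform ContDiff SchwartzMap ComplexConjugate

lemma qp_fourier_toLp (F : ℝ → ℂ) (h1 : Integrable F volume) (h2 : MemLp F 2 volume) :
    (𝓕 (h2.toLp F) : Lp ℂ 2 (volume : Measure ℝ)) =ᵐ[volume] 𝓕 F := by
  have hcont : Continuous (𝓕 F) :=
    VectorFourier.fourierIntegral_continuous Real.continuous_fourierChar
      (by exact continuous_inner) h1
  refine ae_eq_of_integral_contDiff_smul_eq
    ((Lp.memLp _).locallyIntegrable (by norm_num)) hcont.locallyIntegrable ?_
  intro g hg hgs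
  have hgs' : HasCompactSupport (fun x => (g x : ℂ)) := hgs.comp_left (g := fun x : ℝ => (x:ℂ)) (by simp)
  have hg' : ContDiff ℝ ∞ (fun x => (g x : ℂ)) := Complex.ofRealCLM.contDiff.comp hg
  let G : 𝓢(ℝ, ℂ) := hgs'.toSchwartzMap hg'
  have key := congrArg (fun T : 𝓢'(ℝ, ℂ) => T G)
    (Lp.fourier_toTemperedDistribution_eq (h2.toLp F))
  simp only [TemperedDistribution.fourier_apply, Lp.toTemperedDistribution_apply] at key
  have e1 : ∫ x, g x • (𝓕 (h2.toLp F) : Lp ℂ 2 (volume : Measure ℝ)) x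
      = ∫ x, G x • (𝓕 (h2.toLp F) : Lp ℂ 2 (volume : Measure ℝ)) x := by
    congr 1
  have e2 : ∫ x, (𝓕 G : 𝓢(ℝ, ℂ)) x • (h2.toLp F) x = ∫ x, (𝓕 (G : ℝ → ℂ)) x • F x := by
    apply integral_congr_ae
    filter_upwards [h2.coeFn_toLp] with x hx
    rw [hx, SchwartzMap.fourier_coe]
  have e3 : ∫ x, (𝓕 (G : ℝ → ℂ)) x • F x = ∫ x, G x • 𝓕 F x := by
    have := VectorFourier.integral_fourierIntegral_smul_eq_flip (μ := volume) (ν := volume)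
      (L := innerₗ ℝ) Real.continuous_fourierChar (by exact continuous_inner) G.integrable h1
    rw [flip_innerₗ] at this
    exact this
  rw [e1, ← key, e2, e3]
  congr 1

lemma qp_plancherel (F G : ℝ → ℂ) (hF1 : Integrable F volume) (hF2 : MemLp F 2 volume)
    (hG1 : Integrable G volume) (hG2 : MemLp G 2 volume) :
    ∫ x, 𝓕 F x * conj (𝓕 G x) = ∫ x, F x * conj (G x) := by
  have h := Lp.inner_fourier_eq (hG2.toLp G) (hF2.toLp F)
  rw [L2.inner_def, L2.inner_def] at h
  simp only [RCLike.inner_apply] at h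
  convert! h using 1
  · apply integral_congr_ae
    filter_upwards [qp_fourier_toLp F hF1 hF2, qp_fourier_toLp G hG1 hG2] with x h1 h2
    rw [h1, h2]
  · apply integral_congr_ae
    filter_upwards [hF2.coeFn_toLp, hG2.coeFn_toLp] with x h1 h2
    rw [h1, h2]

lemma qp_conv_integrable {u v : ℝ → ℂ} (hu : Integrable u volume) (hv : Integrable v volume) :
    Integrable (fun p : ℝ × ℝ => u p.2 * v (p.2 - p.1)) (volume.prod volume) := by
  have := hu.convolution_integrand (ContinuousLinearMap.mul ℂ ℂ) hv.comp_neg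
  simpa using this

lemma qp_conv_integral {u v : ℝ → ℂ} (hu : Integrable u volume) (hv : Integrable v volume) :
    ∫ β, ∫ t, u t * v (t - β) = (∫ t, u t) * ∫ t, v t := by
  have := integral_convolution (μ := volume) (ν := volume) (ContinuousLinearMap.mul ℂ ℂ) hu hv.comp_neg
  rw [integral_neg_eq_self] at this
  simpa [convolution] using this

lemma qp_const (b : ℝ) (hb : 0 < b) : qpConst b * conj (qpConst b) = ((b / (2 * Real.pi) : ℝ) : ℂ) := by
  rw [Complex.mul_conj, Complex.normSq_eq_norm_sq]
  congr 1
  unfold qpConst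
  rw [norm_mul, mul_pow, ← Complex.ofReal_neg, Complex.norm_exp_ofReal_mul_I, Complex.norm_real,
    Real.norm_eq_abs, sq_abs, Real.sq_sqrt (by positivity)]
  simp

noncomputable def qpF (a d : ℝ) (ψ f : ℝ → ℂ) (α β t : ℝ) : ℂ :=
  Complex.exp (((2 * a * t ^ 2 + 2 * d * t : ℝ) : ℂ) * Complex.I) * (f t * conj (dil ψ α (t - β)))

lemma qp_eq (a b c d e : ℝ) (ψ f : ℝ → ℂ) (ξ β α : ℝ) :
    QPWPT a b c d e ψ f ξ β α = qpConst b *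
      (Complex.exp (((c * ξ ^ 2 + e * ξ - a * β ^ 2 - d * β : ℝ) : ℂ) * Complex.I) *
      𝓕 (qpF a d ψ f α β) (-(b / (2 * Real.pi)) * ξ)) := by
  unfold QPWPT
  rw [Real.fourier_real_eq_integral_exp_smul]
  congr 1
  rw [← integral_const_mul]
  refine integral_congr_ae (Filter.Eventually.of_forall fun t => ?_)
  beta_reduce
  unfold qpF
  rw [smul_eq_mul, ← mul_assoc, ← mul_assoc, ← mul_assoc, ← Complex.exp_add, ← Complex.exp_add]
  congr 3
  push_cast
  have : (Real.pi : ℂ) ≠ 0 := by exact_mod_cast Real.pi_ne_zero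
  field_simp
  ring

lemma qp_exp_conj (x : ℝ) : Complex.exp (x * Complex.I) * conj (Complex.exp (x * Complex.I)) = 1 := by
  rw [Complex.mul_conj, Complex.normSq_eq_norm_sq, Complex.norm_exp_ofReal_mul_I]; simp

lemma qp_dil_memLp {ψ : ℝ → ℂ} (h : MemLp ψ 2 volume) {α : ℝ} (hα : 0 < α) :
    MemLp (dil ψ α) 2 volume := by
  have hm : AEStronglyMeasurable (fun t => ψ (t / α)) volume :=
    h.1.comp_quasiMeasurePreserving (by
      simpa [div_eq_inv_mul] using Measure.quasiMeasurePreserving_smul (μ := (volume : Measure ℝ)) (r := α⁻¹) (by positivity))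
  refine MemLp.const_mul ?_ _
  rw [memLp_two_iff_integrable_sq_norm hm]
  exact ((memLp_two_iff_integrable_sq_norm h.1).1 h).comp_div hα.ne'

lemma qp_meas (a d : ℝ) {ψ f : ℝ → ℂ} (hf : MemLp f 2 volume) (hψ : MemLp ψ 2 volume)
    {α : ℝ} (hα : 0 < α) (β : ℝ) : Integrable (qpF a d ψ f α β) volume := by
  have h := qp_dil_memLp hψ hα
  have h' : MemLp (fun t => conj (dil ψ α (t - β))) 2 volume :=
    (h.comp_measurePreserving (measurePreserving_sub_right volume β)).star
  have h3 : Integrable (fun t => f t * conj (dil ψ α (t - β))) volume := hf.integrable_mul h'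
  refine h3.bdd_mul (c := 1) (by fun_prop) ?_
  filter_upwards with t
  rw [Complex.norm_exp_ofReal_mul_I]

lemma qp_sq {f : ℝ → ℂ} (hf : MemLp f 2 volume) :
    Integrable (fun t => f t * conj (f t)) volume := hf.integrable_mul hf.star

lemma qp_L2 (a d : ℝ) {ψ f : ℝ → ℂ} (hf : MemLp f 2 volume) (hψ : MemLp ψ 2 volume)
    {α : ℝ} (hα : 0 < α) : ∀ᵐ β : ℝ, MemLp (qpF a d ψ f α β) 2 volume := by
  have h := qp_dil_memLp hψ hα
  filter_upwards [(qp_conv_integrable (qp_sq hf) (qp_sq h)).prod_right_ae] with β hβ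
  rw [memLp_two_iff_integrable_sq_norm (qp_meas a d hf hψ hα β).1]
  convert! hβ.norm using 2 with t
  simp only [qpF, norm_mul, Complex.norm_exp_ofReal_mul_I, RCLike.norm_conj]
  ring

theorem qpwpt_moyal (a b c d e : ℝ) (hb : 0 < b) (f g ψ φ : ℝ → ℂ)
    (hf1 : Integrable f volume) (hf2 : MemLp f 2 volume)
    (hg1 : Integrable g volume) (hg2 : MemLp g 2 volume)
    (hψ1 : Integrable ψ volume) (hψ2 : MemLp ψ 2 volume)
    (hφ1 : Integrable φ volume) (hφ2 : MemLp φ 2 volume)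
    (α : ℝ) (hα : 0 < α) :
    ∫ β : ℝ, ∫ ξ : ℝ,
        QPWPT a b c d e ψ f ξ β α * (starRingEnd ℂ) (QPWPT a b c d e φ g ξ β α)
      = (starRingEnd ℂ) (∫ t : ℝ, ψ t * (starRingEnd ℂ) (φ t)) *
        ∫ t : ℝ, f t * (starRingEnd ℂ) (g t) := by
  have hψd := qp_dil_memLp hψ2 hα
  have hφd := qp_dil_memLp hφ2 hα
  have hfg : Integrable (fun t => f t * conj (g t)) volume := hf2.integrable_mul hg2.star
  have hpp : Integrable (fun t => conj (dil ψ α t) * dil φ α t) volume :=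
    hψd.star.integrable_mul hφd
  have hconst : ∫ t, conj (dil ψ α t) * dil φ α t = conj (∫ t : ℝ, ψ t * conj (φ t)) := by
    rw [← integral_conj]
    have hr : (α ^ (-(1 / 2 : ℝ))) * (α ^ (-(1 / 2 : ℝ))) = α⁻¹ := by
      rw [← Real.rpow_add hα, ← Real.rpow_neg_one]; norm_num
    have : ∀ t, conj (dil ψ α t) * dil φ α t
        = ((α⁻¹ : ℝ) : ℂ) * (fun s => conj (ψ s * conj (φ s))) (t / α) := by
      intro t
      rw [← hr]
      simp only [dil, map_mul, Complex.conj_conj, Complex.conj_ofReal, Complex.ofReal_mul]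
      ring
    refine (integral_congr_ae (Filter.Eventually.of_forall this)).trans ?_
    rw [integral_const_mul, Measure.integral_comp_div (fun s => conj (ψ s * conj (φ s))) α, abs_of_pos hα, Complex.real_smul,
      ← mul_assoc, ← Complex.ofReal_mul, inv_mul_cancel₀ hα.ne']
    simp
  rw [← hconst, mul_comm, ← qp_conv_integral hfg hpp]
  apply integral_congr_ae
  filter_upwards [qp_L2 a d hf2 hψ2 hα, qp_L2 a d hg2 hφ2 hα] with β h1 h2
  have hP := qp_plancherel _ _ (qp_meas a d hf2 hψ2 hα β) h1 (qp_meas a d hg2 hφ2 hα β) h2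
  have hint : ∀ ξ, QPWPT a b c d e ψ f ξ β α * conj (QPWPT a b c d e φ g ξ β α)
      = ((b / (2 * Real.pi) : ℝ) : ℂ) * (fun x => 𝓕 (qpF a d ψ f α β) x *
          conj (𝓕 (qpF a d φ g α β) x)) (-(b / (2 * Real.pi)) * ξ) := by
    intro ξ
    rw [qp_eq, qp_eq, ← qp_const b hb]
    simp only [map_mul]
    have := qp_exp_conj (c * ξ ^ 2 + e * ξ - a * β ^ 2 - d * β)
    linear_combination (qpConst b * conj (qpConst b) * (𝓕 (qpF a d ψ f α β) (-(b / (2 * Real.pi)) * ξ)) * conj (𝓕 (qpF a d φ g α β) (-(b / (2 * Real.pi)) * ξ))) * this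
  refine (integral_congr_ae (Filter.Eventually.of_forall hint)).trans ?_
  rw [integral_const_mul, Measure.integral_comp_mul_left (fun x => 𝓕 (qpF a d ψ f α β) x *
          conj (𝓕 (qpF a d φ g α β) x)) (-(b / (2 * Real.pi))), hP, Complex.real_smul, ← mul_assoc,
    ← Complex.ofReal_mul]
  have hb' : b / (2 * Real.pi) * |(-(b / (2 * Real.pi)))⁻¹| = 1 := by
    have : 0 < b / (2 * Real.pi) := by positivity
    rw [abs_inv, abs_neg, abs_of_pos this, mul_inv_cancel₀ this.ne']
  rw [hb', Complex.ofReal_one, one_mul]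
  congr 1
  ext t
  unfold qpF
  simp only [map_mul, Complex.conj_conj]
  have := qp_exp_conj (2 * a * t ^ 2 + 2 * d * t)
  linear_combination (f t * conj (dil ψ α (t - β)) * conj (g t) * dil φ α (t - β)) * this
end

section
/- Heisenberg-type uncertainty principle for the QP-WPT: let f ∈ L¹(ℝ) ∩ L²(ℝ) and ψ ∈ L¹(ℝ) ∩ L²(ℝ), fix α > 0, and assume that ∫_ℝ t² |f(t)|² dt < ∞ and ∫_ℝ ∫_ℝ ξ² |W^μ_f(ξ, β, α)|² dξ dβ < ∞. Then (∫_ℝ t² |f(t)|² dt) · (∫_ℝ ∫_ℝ ξ² |W^μ_f(ξ, β, α)|² dξ dβ) ≥ ((1/(2b)) · ‖f‖²_{L²(ℝ)} · ‖ψ‖_{L²(ℝ)})². -/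
open MeasureTheory Complex

open scoped FourierTransform ContDiff SchwartzMap in
theorem aux_fourier_ae_s19 (g : ℝ → ℂ) (h1 : Integrable g) (h2 : MemLp g 2) :
    ((𝓕 (h2.toLp g) : Lp ℂ 2 (volume : Measure ℝ)) : ℝ → ℂ) =ᵐ[volume] 𝓕 g := by
  have hcont : Continuous (𝓕 g) := by
    exact VectorFourier.fourierIntegral_continuous Real.continuous_fourierChar
      (by exact continuous_inner) h1
  apply ae_eq_of_integral_contDiff_smul_eq
  · exact (Lp.memLp _).locallyIntegrable (by norm_num)
  · exact hcont.locallyIntegrable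
  · intro φ hφ hc
    have hg₁ : HasCompactSupport (Complex.ofRealCLM ∘ φ) := hc.comp_left rfl
    have hg₂ : ContDiff ℝ ∞ (Complex.ofRealCLM ∘ φ) := by fun_prop
    set Φ : 𝓢(ℝ, ℂ) := hg₁.toSchwartzMap hg₂ with hΦ
    have e1 := congrArg (fun T : 𝓢'(ℝ, ℂ) => T Φ)
      (Lp.fourier_toTemperedDistribution_eq (h2.toLp g))
    simp only [TemperedDistribution.fourier_apply, Lp.toTemperedDistribution_apply] at e1
    have e2 : ∫ x, (𝓕 Φ) x • (h2.toLp g) x = ∫ x, (𝓕 Φ) x • g x := by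
      apply integral_congr_ae
      filter_upwards [h2.coeFn_toLp] with x hx
      rw [hx]
    have e3 : ∫ x, (𝓕 Φ) x • g x = ∫ x, Φ x • 𝓕 g x := by
      have := VectorFourier.integral_fourierIntegral_smul_eq_flip (L := innerₗ ℝ)
        Real.continuous_fourierChar continuous_inner (Φ.integrable (μ := volume)) h1
      rw [flip_innerₗ] at this
      exact this
    have e4 : ∀ u : ℝ → ℂ, ∫ x, φ x • u x = ∫ x, Φ x • u x := by
      intro u; simp [hΦ]
    rw [e4, e4, ← e3, ← e2, e1]

theorem aux_lp_norm (g : ℝ → ℂ) (h2 : MemLp g 2) :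
    ‖h2.toLp g‖ ^ 2 = ∫ x, ‖g x‖ ^ 2 := by
  have := L2.inner_def (𝕜 := ℂ) (h2.toLp g) (h2.toLp g)
  rw [inner_self_eq_norm_sq_to_K] at this
  have h3 : (∫ a, inner ℂ ((h2.toLp g) a) ((h2.toLp g) a)) = ∫ x, ((‖g x‖ ^ 2 : ℝ) : ℂ) := by
    apply integral_congr_ae
    filter_upwards [h2.coeFn_toLp] with x hx
    rw [hx, inner_self_eq_norm_sq_to_K]; simp
  rw [h3] at this
  have h4 : ∫ x, ((‖g x‖ ^ 2 : ℝ) : ℂ) = ((∫ x, ‖g x‖ ^ 2 : ℝ) : ℂ) := integral_ofReal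
  rw [h4] at this
  apply Complex.ofReal_injective
  rw [← this]
  push_cast
  rfl

open scoped FourierTransform in
theorem aux_plancherel (g : ℝ → ℂ) (h1 : Integrable g) (h2 : MemLp g 2) :
    Integrable (fun w => ‖𝓕 g w‖ ^ 2) ∧ ∫ w, ‖𝓕 g w‖ ^ 2 = ∫ x, ‖g x‖ ^ 2 := by
  have hae := aux_fourier_ae_s19 g h1 h2
  have hm : MemLp (𝓕 g) 2 := (memLp_congr_ae hae).1 (Lp.memLp _)
  refine ⟨hm.integrable_norm_pow (by norm_num), ?_⟩
  rw [← aux_lp_norm _ hm, ← aux_lp_norm _ h2, ← Lp.norm_fourier_eq (h2.toLp g)]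
  congr 2
  rw [← Lp.toLp_coeFn (𝓕 (h2.toLp g)) (Lp.memLp _)]
  exact (MemLp.toLp_eq_toLp_iff _ _).2 hae.symm

open scoped FourierTransform in
theorem aux_fourier_shift (g : ℝ → ℂ) (h1 : Integrable g) (h w : ℝ) :
    ‖𝓕 (fun t => g (t + h) - g t) w‖ ^ 2 ≤ (2 * Real.pi * h) ^ 2 * (w ^ 2 * ‖𝓕 g w‖ ^ 2) := by
  have e1 : 𝓕 (fun t => g (t + h)) w = Complex.exp (Complex.I * ((2 * Real.pi * h * w : ℝ) : ℂ)) * 𝓕 g w := by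
    have := congrFun (VectorFourier.fourierIntegral_comp_add_right Real.fourierChar volume (innerₗ ℝ) g h) w
    refine this.trans ?_
    rw [Circle.smul_def, Real.fourierChar_apply]
    simp only [smul_eq_mul]
    congr 2
    simp; ring
  have e2 : 𝓕 (fun t => g (t + h) - g t) w = 𝓕 (fun t => g (t + h)) w - 𝓕 g w := by
    simp only [Real.fourier_real_eq]
    rw [← integral_sub]
    · simp [smul_sub]
    · have := (Real.fourierIntegral_convergent_iff (μ := volume) w).2 (h1.comp_add_right h)
      simpa [mul_comm] using this
    · have := (Real.fourierIntegral_convergent_iff (μ := volume) w).2 h1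
      simpa [mul_comm] using this
  rw [e2, e1, ← sub_one_mul, norm_mul, mul_pow]
  have h3 := Real.norm_exp_I_mul_ofReal_sub_one_le (x := 2 * Real.pi * h * w)
  have h4 := pow_le_pow_left₀ (norm_nonneg _) h3 2
  rw [Real.norm_eq_abs, sq_abs] at h4
  calc _ ≤ (2 * Real.pi * h * w) ^ 2 * ‖𝓕 g w‖ ^ 2 := by gcongr
    _ = _ := by ring

open scoped FourierTransform in
theorem aux_heisenberg (g : ℝ → ℂ) (h1 : Integrable g) (h2 : MemLp g 2)
    (hA : Integrable (fun t : ℝ => t ^ 2 * ‖g t‖ ^ 2))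
    (hB : Integrable (fun w : ℝ => w ^ 2 * ‖𝓕 g w‖ ^ 2)) (l : ℝ) (hl : 0 < l) :
    l * (∫ t, ‖g t‖ ^ 2) ≤ l ^ 2 * (∫ t, t ^ 2 * ‖g t‖ ^ 2)
      + 4 * Real.pi ^ 2 * ∫ w, w ^ 2 * ‖𝓕 g w‖ ^ 2 := by
  have hN : Integrable (fun t => ‖g t‖ ^ 2) := h2.integrable_norm_pow (by norm_num)
  have hM : Integrable (fun t => t * ‖g t‖ ^ 2) := by
    refine (hA.add hN).mono' ?_ ?_
    · exact (by fun_prop : AEStronglyMeasurable (fun t : ℝ => t)).mul hN.aestronglyMeasurable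
    · refine Filter.Eventually.of_forall fun t => ?_
      simp only [norm_mul, Real.norm_eq_abs, norm_pow, abs_norm, Pi.add_apply]
      have : |t| ≤ t ^ 2 + 1 := by rw [← sq_abs]; nlinarith [sq_nonneg (|t| - 1), abs_nonneg t]
      nlinarith [sq_nonneg ‖g t‖]
  set N := ∫ t, ‖g t‖ ^ 2 with hNd
  set A := ∫ t, t ^ 2 * ‖g t‖ ^ 2 with hAd
  set B := ∫ w, w ^ 2 * ‖𝓕 g w‖ ^ 2 with hBd
  set M := ∫ t, t * ‖g t‖ ^ 2 with hMd
  have key : ∀ h : ℝ, 0 < h →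
      l * N ≤ l ^ 2 * (A - h * M + h ^ 2 / 2 * N) + 4 * Real.pi ^ 2 * B := by
    intro h hh
    have hv1 : Integrable (fun t => g (t + h) - g t) := (h1.comp_add_right h).sub h1
    have hu2 : MemLp (fun t => g (t + h)) 2 :=
      h2.comp_measurePreserving (measurePreserving_add_right volume h)
    have hv2 : MemLp (fun t => g (t + h) - g t) 2 := hu2.sub h2
    obtain ⟨p1, p2⟩ := aux_plancherel _ hv1 hv2
    have hD : ∫ t, ‖g (t + h) - g t‖ ^ 2 ≤ (2 * Real.pi * h) ^ 2 * B := by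
      rw [← p2, hBd, ← integral_const_mul]
      exact integral_mono p1 (hB.const_mul _) (fun w => aux_fourier_shift g h1 h w)
    have hDi : Integrable (fun t => ‖g (t + h) - g t‖ ^ 2) :=
      hv2.integrable_norm_pow (by norm_num)
    -- shifted moments
    have i1 : Integrable (fun t => t * ‖g (t + h)‖ ^ 2) := by
      have := (hM.sub (hN.const_mul h)).comp_add_right h
      refine this.congr (Filter.Eventually.of_forall fun t => ?_)
      simp; ring
    have s1 : ∫ t, t * ‖g (t + h)‖ ^ 2 = M - h * N := by
      rw [hMd, hNd, ← integral_const_mul, ← integral_sub hM (hN.const_mul h),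
        ← integral_add_right_eq_self (fun t => t * ‖g t‖ ^ 2 - h * ‖g t‖ ^ 2) h]
      congr 1; ext t; ring
    have i2 : Integrable (fun t => t ^ 2 * ‖g (t + h)‖ ^ 2) := by
      have := ((hA.sub (hM.const_mul (2 * h))).add (hN.const_mul (h ^ 2))).comp_add_right h
      refine this.congr (Filter.Eventually.of_forall fun t => ?_)
      simp; ring
    have s2 : ∫ t, t ^ 2 * ‖g (t + h)‖ ^ 2 = A - 2 * h * M + h ^ 2 * N := by
      rw [hMd, hNd, hAd, ← integral_const_mul, ← integral_const_mul,
        ← integral_sub hA (hM.const_mul _), ← integral_add (by exact hA.sub (hM.const_mul _)) (hN.const_mul _),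
        ← integral_add_right_eq_self (fun t => t ^ 2 * ‖g t‖ ^ 2 - 2 * h * (t * ‖g t‖ ^ 2)
          + h ^ 2 * ‖g t‖ ^ 2) h]
      congr 1; ext t; ring
    have hpt : ∀ t, l * h * (t * ‖g t‖ ^ 2 - t * ‖g (t + h)‖ ^ 2) ≤
        (l * h) ^ 2 / 2 * (t ^ 2 * ‖g (t + h)‖ ^ 2 + t ^ 2 * ‖g t‖ ^ 2) + ‖g (t + h) - g t‖ ^ 2 := by
      intro t
      set x := ‖g t‖
      set y := ‖g (t + h)‖
      set z := ‖g (t + h) - g t‖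
      have hxy : |x - y| ≤ z := by
        have := abs_norm_sub_norm_le (g (t + h)) (g t)
        rwa [abs_sub_comm] at this
      have hz : (x - y) ^ 2 ≤ z ^ 2 := by
        rw [← sq_abs (x - y)]; exact pow_le_pow_left₀ (abs_nonneg _) hxy 2
      nlinarith [sq_nonneg (l * h * t * x - (x - y)), sq_nonneg (l * h * t * y - (x - y))]
    have hint := integral_mono (((hM.sub i1).const_mul (l * h)))
      (((i2.add hA).const_mul ((l * h) ^ 2 / 2)).add hDi) hpt
    simp only [Pi.add_apply, Pi.sub_apply] at hint
    rw [integral_const_mul, integral_sub hM i1, integral_add _ hDi, integral_const_mul,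
      integral_add i2 hA, s1, s2] at hint
    · have h5 : h ^ 2 * (l * N) ≤ h ^ 2 *
          (l ^ 2 * (A - h * M + h ^ 2 / 2 * N) + 4 * Real.pi ^ 2 * B) := by
        nlinarith
      exact le_of_mul_le_mul_left h5 (by positivity)
    · exact (i2.add hA).const_mul _
  have hlim : Filter.Tendsto (fun h : ℝ => l ^ 2 * (A - h * M + h ^ 2 / 2 * N) + 4 * Real.pi ^ 2 * B)
      (nhdsWithin 0 (Set.Ioi 0)) (nhds (l ^ 2 * A + 4 * Real.pi ^ 2 * B)) := by
    apply tendsto_nhdsWithin_of_tendsto_nhds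
    have : Continuous (fun h : ℝ => l ^ 2 * (A - h * M + h ^ 2 / 2 * N) + 4 * Real.pi ^ 2 * B) := by
      fun_prop
    simpa using this.tendsto 0
  exact ge_of_tendsto hlim (Filter.eventually_of_mem self_mem_nhdsWithin key)

theorem aux_conv (F P : ℝ → ℝ) (hF : Integrable F) (hP : Integrable P) :
    (∀ᵐ β : ℝ, Integrable (fun t => F t * P (t - β))) ∧
    Integrable (fun β => ∫ t, F t * P (t - β)) ∧
    ∫ β : ℝ, ∫ t, F t * P (t - β) = (∫ t, F t) * ∫ t, P t := by
  have hP' : Integrable (fun x => P (-x)) := hP.comp_neg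
  have h := Integrable.convolution_integrand (μ := volume) (ν := volume)
    (ContinuousLinearMap.mul ℝ ℝ) hF hP'
  simp only [ContinuousLinearMap.mul_apply', neg_sub] at h
  refine ⟨h.prod_right_ae, h.integral_prod_left, ?_⟩
  have h3 := integral_convolution (μ := volume) (ν := volume)
    (ContinuousLinearMap.mul ℝ ℝ) hF hP'
  simp only [convolution, ContinuousLinearMap.mul_apply', neg_sub] at h3
  rw [h3, integral_neg_eq_self]

theorem aux_dil (ψ : ℝ → ℂ) (hψ1 : Integrable ψ) (hψ2 : MemLp ψ 2) (α : ℝ) (hα : 0 < α) :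
    MemLp (dil ψ α) 2 ∧ ∫ t, ‖dil ψ α t‖ ^ 2 = ∫ t, ‖ψ t‖ ^ 2 := by
  have hN : Integrable (fun t => ‖ψ t‖ ^ 2) := hψ2.integrable_norm_pow (by norm_num)
  have e : (fun t => ‖dil ψ α t‖ ^ 2) = fun t => α⁻¹ * ‖ψ (t / α)‖ ^ 2 := by
    ext t
    simp only [dil, norm_mul, mul_pow, Complex.norm_real, Real.norm_eq_abs, sq_abs]
    rw [← Real.rpow_natCast, ← Real.rpow_mul hα.le]
    norm_num [Real.rpow_neg_one]
  have hm : AEStronglyMeasurable (dil ψ α) :=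
    ((hψ1.comp_div hα.ne').const_mul _).aestronglyMeasurable
  refine ⟨(memLp_two_iff_integrable_sq_norm hm).2 ?_, ?_⟩
  · rw [e]; exact (hN.comp_div hα.ne').const_mul _
  · rw [e, integral_const_mul, Measure.integral_comp_div (fun t => ‖ψ t‖ ^ 2) α, abs_of_pos hα,
      smul_eq_mul, ← mul_assoc, inv_mul_cancel₀ hα.ne', one_mul]

/-- the windowed signal -/
noncomputable def auxG (a d : ℝ) (f φ : ℝ → ℂ) (β t : ℝ) : ℂ :=
  Complex.exp (Complex.I * ((2 * a * t ^ 2 + 2 * d * t : ℝ) : ℂ)) * f t *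
    (starRingEnd ℂ) (φ (t - β))

theorem aux_norm_exp (x : ℝ) : ‖Complex.exp (Complex.I * (x : ℂ))‖ = 1 := by
  rw [mul_comm]; exact Complex.norm_exp_ofReal_mul_I x

theorem auxG_norm (a d : ℝ) (f φ : ℝ → ℂ) (β t : ℝ) :
    ‖auxG a d f φ β t‖ ^ 2 = ‖f t‖ ^ 2 * ‖φ (t - β)‖ ^ 2 := by
  simp only [auxG, norm_mul, aux_norm_exp, RCLike.norm_conj, one_mul, mul_pow]

theorem auxG_integrable (a d : ℝ) (f φ : ℝ → ℂ) (hf : MemLp f 2) (hφ : MemLp φ 2) (β : ℝ) :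
    Integrable (auxG a d f φ β) := by
  have h2 : MemLp (fun t => φ (t - β)) 2 :=
    hφ.comp_measurePreserving (measurePreserving_sub_right volume β)
  have h3 : Integrable (fun t => f t * (starRingEnd ℂ) (φ (t - β))) := hf.integrable_mul h2.star
  have h4 : AEStronglyMeasurable
      (fun t : ℝ => Complex.exp (Complex.I * ((2 * a * t ^ 2 + 2 * d * t : ℝ) : ℂ))) := by
    apply Continuous.aestronglyMeasurable; fun_prop
  refine (h3.bdd_mul (c := 1) h4
    (Filter.Eventually.of_forall fun t => (aux_norm_exp _).le)).congr
    (Filter.Eventually.of_forall fun t => ?_)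
  simp only [auxG]; ring

open scoped FourierTransform in
theorem aux_W (a b c d e : ℝ) (hb : 0 < b) (f ψ : ℝ → ℂ) (ξ β α : ℝ) :
    ‖QPWPT a b c d e ψ f ξ β α‖ ^ 2 =
      b / (2 * Real.pi) * ‖𝓕 (auxG a d f (dil ψ α) β) (-(b / (2 * Real.pi)) * ξ)‖ ^ 2 := by
  have e1 : (∫ t : ℝ,
      Complex.exp (Complex.I * ((2 * a * t ^ 2 + b * t * ξ + c * ξ ^ 2 + 2 * d * t + e * ξ
        - a * β ^ 2 - d * β : ℝ) : ℂ)) * f t * (starRingEnd ℂ) (dil ψ α (t - β))) =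
      Complex.exp (Complex.I * ((c * ξ ^ 2 + e * ξ - a * β ^ 2 - d * β : ℝ) : ℂ)) *
        𝓕 (auxG a d f (dil ψ α) β) (-(b / (2 * Real.pi)) * ξ) := by
    rw [Real.fourier_real_eq_integral_exp_smul, ← integral_const_mul]
    congr 1; ext t
    have : -2 * Real.pi * t * (-(b / (2 * Real.pi)) * ξ) = b * t * ξ := by
      field_simp
    rw [this, auxG, smul_eq_mul, ← mul_assoc, ← mul_assoc, ← mul_assoc, ← Complex.exp_add,
      ← Complex.exp_add]
    congr 3
    push_cast; ring
  have hq : ‖qpConst b‖ ^ 2 = b / (2 * Real.pi) := by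
    have h0 : ‖Complex.exp (-((Real.pi / 4 : ℝ) : ℂ) * Complex.I)‖ = 1 := by
      rw [← Complex.ofReal_neg]; exact Complex.norm_exp_ofReal_mul_I _
    rw [qpConst, norm_mul, h0, mul_one, Complex.norm_real, Real.norm_eq_abs, sq_abs,
      Real.sq_sqrt (by positivity)]
  rw [QPWPT, e1, norm_mul, norm_mul, aux_norm_exp, one_mul, mul_pow, hq]

open scoped FourierTransform in
theorem aux_Wint (a b c d e : ℝ) (hb : 0 < b) (f ψ : ℝ → ℂ) (β α : ℝ)
    (h : Integrable (fun ξ : ℝ => ξ ^ 2 * ‖QPWPT a b c d e ψ f ξ β α‖ ^ 2)) :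
    Integrable (fun w : ℝ => w ^ 2 * ‖𝓕 (auxG a d f (dil ψ α) β) w‖ ^ 2) ∧
    4 * Real.pi ^ 2 * (∫ w : ℝ, w ^ 2 * ‖𝓕 (auxG a d f (dil ψ α) β) w‖ ^ 2) =
      b ^ 2 * ∫ ξ : ℝ, ξ ^ 2 * ‖QPWPT a b c d e ψ f ξ β α‖ ^ 2 := by
  set G : ℝ → ℝ := fun w => w ^ 2 * ‖𝓕 (auxG a d f (dil ψ α) β) w‖ ^ 2 with hG
  have hpi := Real.pi_pos
  set k := b / (2 * Real.pi) with hk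
  have hk0 : 0 < k := by positivity
  have e1 : (fun ξ : ℝ => ξ ^ 2 * ‖QPWPT a b c d e ψ f ξ β α‖ ^ 2) =
      fun ξ => k⁻¹ * G (-k * ξ) := by
    ext ξ
    rw [aux_W a b c d e hb, hG]
    simp only [← hk]
    field_simp
  rw [e1] at h ⊢
  have h' : Integrable (fun ξ => G (-k * ξ)) := by
    refine (h.const_mul k).congr (Filter.Eventually.of_forall fun ξ => ?_)
    simp only
    rw [← mul_assoc, mul_inv_cancel₀ hk0.ne', one_mul]
  refine ⟨(integrable_comp_mul_left_iff G (neg_ne_zero.2 hk0.ne')).1 h', ?_⟩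
  rw [integral_const_mul, Measure.integral_comp_mul_left, smul_eq_mul, abs_inv, abs_neg,
    abs_of_pos hk0, hk]
  field_simp
  try ring

theorem qpwpt_heisenberg (a b c d e : ℝ) (hb : 0 < b) (f ψ : ℝ → ℂ)
    (hf1 : Integrable f volume) (hf2 : MemLp f 2 volume)
    (hψ1 : Integrable ψ volume) (hψ2 : MemLp ψ 2 volume)
    (α : ℝ) (hα : 0 < α)
    (hft : Integrable (fun t : ℝ => t ^ 2 * ‖f t‖ ^ 2) volume)
    (hWξ : Integrable (fun q : ℝ × ℝ => q.1 ^ 2 * ‖QPWPT a b c d e ψ f q.1 q.2 α‖ ^ 2) volume) :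
    (∫ t : ℝ, t ^ 2 * ‖f t‖ ^ 2) *
        (∫ β : ℝ, ∫ ξ : ℝ, ξ ^ 2 * ‖QPWPT a b c d e ψ f ξ β α‖ ^ 2)
      ≥ ((1 / (2 * b)) * (∫ t : ℝ, ‖f t‖ ^ 2) *
          (∫ t : ℝ, ‖ψ t‖ ^ 2) ^ ((1 : ℝ) / 2)) ^ 2 := by
  have hpi := Real.pi_pos
  obtain ⟨hφ2, hφn⟩ := aux_dil ψ hψ1 hψ2 α hα
  have hF : Integrable (fun t => ‖f t‖ ^ 2) := hf2.integrable_norm_pow (by norm_num)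
  have hP : Integrable (fun t => ‖dil ψ α t‖ ^ 2) := hφ2.integrable_norm_pow (by norm_num)
  obtain ⟨n1, n2, n3⟩ := aux_conv _ _ hF hP
  obtain ⟨m1, m2, m3⟩ := aux_conv _ _ hft hP
  rw [hφn] at n3 m3
  have w1 := hWξ.prod_left_ae
  have w2 := hWξ.integral_prod_right
  simp only at w1 w2
  set F := ∫ t : ℝ, ‖f t‖ ^ 2 with hFd
  set P := ∫ t : ℝ, ‖ψ t‖ ^ 2 with hPd
  set T := ∫ t : ℝ, t ^ 2 * ‖f t‖ ^ 2 with hTd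
  set V := ∫ β : ℝ, ∫ ξ : ℝ, ξ ^ 2 * ‖QPWPT a b c d e ψ f ξ β α‖ ^ 2 with hVd
  have hF0 : 0 ≤ F := integral_nonneg fun t => by positivity
  have hP0 : 0 ≤ P := integral_nonneg fun t => by positivity
  have hT0 : 0 ≤ T := integral_nonneg fun t => by positivity
  have hV0 : 0 ≤ V := integral_nonneg fun β => integral_nonneg fun ξ => by positivity
  have key : ∀ l : ℝ, 0 < l → l * (F * P) ≤ l ^ 2 * (T * P) + b ^ 2 * V := by
    intro l hl
    have hpt : ∀ᵐ β : ℝ, l * (∫ t, ‖f t‖ ^ 2 * ‖dil ψ α (t - β)‖ ^ 2) ≤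
        l ^ 2 * (∫ t, t ^ 2 * ‖f t‖ ^ 2 * ‖dil ψ α (t - β)‖ ^ 2)
        + b ^ 2 * ∫ ξ : ℝ, ξ ^ 2 * ‖QPWPT a b c d e ψ f ξ β α‖ ^ 2 := by
      filter_upwards [n1, m1, w1] with β k1 k2 k3
      have g1 := auxG_integrable a d f (dil ψ α) hf2 hφ2 β
      have g2 : MemLp (auxG a d f (dil ψ α) β) 2 := by
        rw [memLp_two_iff_integrable_sq_norm g1.aestronglyMeasurable]
        simpa only [auxG_norm] using k1
      obtain ⟨v1, v2⟩ := aux_Wint a b c d e hb f ψ β α k3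
      have h := aux_heisenberg _ g1 g2 (by simpa only [auxG_norm, mul_assoc] using k2) v1 l hl
      rw [v2] at h
      simpa only [auxG_norm, mul_assoc] using h
    have h := integral_mono_ae (n2.const_mul l) ((m2.const_mul (l ^ 2)).add (w2.const_mul (b ^ 2))) hpt
    simp only [Pi.add_apply] at h
    rw [integral_const_mul, integral_add (m2.const_mul (l ^ 2)) (w2.const_mul (b ^ 2)),
      integral_const_mul, integral_const_mul, n3, m3] at h
    exact h
  have hdisc := discrim_le_zero (a := T * P) (b := -(F * P)) (c := b ^ 2 * V) (by
    intro x
    rcases le_or_gt x 0 with hx | hx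
    · have h1 : 0 ≤ T * P * (x * x) := by have := mul_self_nonneg x; positivity
      have h2 : 0 ≤ (-x) * (F * P) := mul_nonneg (by linarith) (by positivity)
      have h3 : 0 ≤ b ^ 2 * V := by positivity
      linarith
    · have := key x hx
      linarith)
  rw [discrim] at hdisc
  have hPP : (P ^ ((1 : ℝ) / 2)) ^ 2 = P := by
    rw [← Real.rpow_natCast, ← Real.rpow_mul hP0]; norm_num
  rw [ge_iff_le, mul_pow, hPP, mul_pow, div_pow, one_pow]
  rcases hP0.eq_or_lt with h0 | h0
  · rw [← h0, mul_zero]; positivity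
  · have h1 : P * (F ^ 2 * P) ≤ P * (4 * b ^ 2 * (T * V)) := by nlinarith
    have h2 := le_of_mul_le_mul_left h1 h0
    rw [show 1 / (2 * b) ^ 2 * F ^ 2 * P = F ^ 2 * P / (4 * b ^ 2) by rw [mul_pow]; ring,
      div_le_iff₀ (by positivity)]
    linarith
end
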